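/- Let A be an Artin algebra of finite global dimension with ed(A) = gldim(A). Then ed Ω^i(A-mod) = gldim(A) − i for each 0 ≤ i ≤ gldim(A). -/

import Mathlib

/-!
Why it holds. Let `d = gldim A`. Every `i`-th syzygy has projective dimension at most `d - i`, so two
facts suffice: the finitely generated modules of projective dimension at most `m` have extension
dimension at most `m`, which gives `ed Ωⁱ ≤ d - i`; and `ed Ω⁰ ≤ ed Ωⁱ + i`, which with the
hypothesis `ed Ω⁰ = d` gives the converse inequality.

Both follow by induction from `exists_bracket_succ`: if `0 → K → P → M → 0` is exact with `P`
projective and `K` is built from `T` in `n + 1` steps, then `M` is built in `n + 2` steps from a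
module depending only on `T`. To see this, embed `K` in an injective `I` whose cokernel is built in
`n + 1` steps; this is possible by the horseshoe lemma (`hasCosyzygyIn_ext`) and by comparing
cosyzygies of summands (`isSummand_cokernel`). The pushout of `P ← K → I` splits on one side and
gives an exact sequence `0 → P → M ⊕ I → I/K → 0` (`SES.pushout`).

The argument needs finitely generated injectives: the injective hull of `A` modulo its radical is
finite over the base ring, and it is a cogenerator (`exists_cogenerator`). The global dimension is
defined through minimal syzygies, so projective covers are also needed (`exists_syzygy`).
-/

open CategoryTheory

universe u

namespace Paper

variable (A : Type u) [Ring A]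

/-- A short exact sequence `0 → X → Y → Z → 0` of `A`-modules. -/
def SES (X Y Z : ModuleCat.{u} A) : Prop :=
  ∃ (f : X →ₗ[A] Y) (g : Y →ₗ[A] Z),
    Function.Injective f ∧ Function.Surjective g ∧ LinearMap.range f = LinearMap.ker g

/-- `M` is a direct summand of `X`. -/
def IsSummand (M X : ModuleCat.{u} A) : Prop :=
  ∃ (i : M →ₗ[A] X) (r : X →ₗ[A] M), r.comp i = LinearMap.id

/-- The additive closure `add 𝒯`: direct summands of finite direct sums of objects of `𝒯`. -/
def addClosure (T : Set (ModuleCat.{u} A)) : Set (ModuleCat.{u} A) :=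
  { M | ∃ (n : ℕ) (f : Fin n → ModuleCat.{u} A), (∀ j, f j ∈ T) ∧
      IsSummand A M (ModuleCat.of A (∀ j, (f j : Type u))) }

/-- The extension product `𝒞 • 𝒟`: (summands of) extensions of a module of `𝒟`
by a module of `𝒞`. -/
def bullet (C D : Set (ModuleCat.{u} A)) : Set (ModuleCat.{u} A) :=
  addClosure A { X | ∃ C' ∈ C, ∃ D' ∈ D, SES A C' X D' }

/-- `[𝒯]ₙ`, defined by `[𝒯]₀ = {0}`, `[𝒯]₁ = add 𝒯` and `[𝒯]ₙ = [𝒯]₁ • [𝒯]ₙ₋₁`. -/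
def bracket (T : Set (ModuleCat.{u} A)) : ℕ → Set (ModuleCat.{u} A)
  | 0 => { M | ∀ x : M, x = 0 }
  | 1 => addClosure A T
  | n + 2 => bullet A (addClosure A T) (bracket T (n + 1))

/-- The class `𝒯₁ ⊕ 𝒯₂ = {X ⊕ Y | X ∈ 𝒯₁, Y ∈ 𝒯₂}`. -/
def setSum (T1 T2 : Set (ModuleCat.{u} A)) : Set (ModuleCat.{u} A) :=
  { M | ∃ X ∈ T1, ∃ Y ∈ T2, Nonempty ((M : Type u) ≃ₗ[A] (↥X × ↥Y)) }

/-- The extension dimension of a subcategory `𝒞` of `A`-mod: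
the least `n` such that `𝒞 ⊆ [T]_{n+1}` for some finitely generated module `T`. -/
noncomputable def ed (C : Set (ModuleCat.{u} A)) : ℕ∞ :=
  sInf { n : ℕ∞ | ∃ m : ℕ, n = (m : ℕ∞) ∧
    ∃ T : ModuleCat.{u} A, Module.Finite A T ∧ C ⊆ bracket A {T} (m + 1) }

/-- The category `Ωⁿ(A-mod)` of `n`-th syzygy modules: finitely generated `K` admitting
an exact sequence `0 → K → P⁰ → ⋯ → P^{n-1} → M → 0` with all `Pⁱ` projective,
encoded by a chain of short exact sequences. -/
def SyzCat (n : ℕ) : Set (ModuleCat.{u} A) :=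
  { K | Module.Finite A K ∧
    ∃ (Ks : Fin (n + 1) → ModuleCat.{u} A) (P : Fin n → ModuleCat.{u} A),
      Ks 0 = K ∧ (∀ i, Module.Finite A (Ks i)) ∧
      (∀ i, Module.Finite A (P i) ∧ Module.Projective A (P i)) ∧
      ∀ i : Fin n, SES A (Ks i.castSucc) (P i) (Ks i.succ) }

/-- The category `Ω^∞(A-mod)` of infinite syzygy modules: finitely generated `K` admitting
an exact sequence `0 → K → P⁰ → P¹ → ⋯` with all `Pⁱ` projective. -/
def InfSyzCat : Set (ModuleCat.{u} A) :=
  { K | Module.Finite A K ∧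
    ∃ Ks P : ℕ → ModuleCat.{u} A,
      Ks 0 = K ∧ (∀ i, Module.Finite A (Ks i)) ∧
      (∀ i, Module.Finite A (P i) ∧ Module.Projective A (P i)) ∧
      ∀ i : ℕ, SES A (Ks i) (P i) (Ks (i + 1)) }

/-- A submodule is superfluous (small). -/
def Superfluous {M : ModuleCat.{u} A} (N : Submodule A M) : Prop :=
  ∀ N' : Submodule A M, N ⊔ N' = ⊤ → N' = ⊤

/-- `K` is the (minimal) syzygy `Ω(M)`: the kernel of a projective cover `P → M`. -/
def IsSyzygyOf (K M : ModuleCat.{u} A) : Prop :=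
  ∃ (P : ModuleCat.{u} A) (i : K →ₗ[A] P) (p : P →ₗ[A] M),
    Module.Projective A P ∧ Function.Injective i ∧ Function.Surjective p ∧
    LinearMap.range i = LinearMap.ker p ∧ Superfluous A (LinearMap.ker p)

/-- `K ≅ Ωⁿ(M)`. -/
def IsIterSyzygyOf : ℕ → ModuleCat.{u} A → ModuleCat.{u} A → Prop
  | 0, K, M => Nonempty ((K : Type u) ≃ₗ[A] M)
  | n + 1, K, M => ∃ L, IsIterSyzygyOf n L M ∧ IsSyzygyOf A K L

/-- A submodule is essential. -/
def EssentialIn {M : ModuleCat.{u} A} (N : Submodule A M) : Prop :=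
  ∀ N' : Submodule A M, N ⊓ N' = ⊥ → N' = ⊥

/-- `C` is the cosyzygy `Ω⁻¹(M)`: the cokernel of an injective envelope `M → I`. -/
def IsCosyzygyOf (C M : ModuleCat.{u} A) : Prop :=
  ∃ (I : ModuleCat.{u} A) (j : M →ₗ[A] I) (q : I →ₗ[A] C),
    Module.Injective A I ∧ Function.Injective j ∧ Function.Surjective q ∧
    LinearMap.range j = LinearMap.ker q ∧ EssentialIn A (LinearMap.range j)

/-- `C ≅ Ω⁻ⁿ(M)`. -/
def IsIterCosyzygyOf : ℕ → ModuleCat.{u} A → ModuleCat.{u} A → Prop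
  | 0, C, M => Nonempty ((C : Type u) ≃ₗ[A] M)
  | n + 1, C, M => ∃ L, IsIterCosyzygyOf n L M ∧ IsCosyzygyOf A C L

/-- The global dimension of `A`: the least `d` such that the `d`-th (minimal) syzygy of
every finitely generated `A`-module is projective. -/
noncomputable def gldim : ℕ∞ :=
  sInf { n : ℕ∞ | ∃ d : ℕ, n = (d : ℕ∞) ∧
    ∀ M K : ModuleCat.{u} A, Module.Finite A M → IsIterSyzygyOf A d K M →
      Module.Projective A K }

section
variable {A}

/-! ### Injective hulls and a finitely generated injective cogenerator -/

lemma isSemisimpleModule_of_jacobson_smul [IsArtinianRing A] {M : Type u} [AddCommGroup M] [Module A M]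
    (h : Module.IsTorsionBySet A M (Ring.jacobson A)) : IsSemisimpleModule A M := by
  have : IsSemiprimaryRing A := inferInstance
  let _ := h.module
  exact (h.semilinearMap.isSemisimpleModule_iff_of_bijective Function.bijective_id).2
      inferInstance

/-- Injective hulls, inside a given injective module `I`: every submodule `M` is an essential
submodule of a direct summand `E` of `I`. Here `E` is found as a maximal submodule over `M` disjoint
from a maximal complement `C` of `M`; extending `E → I` along `E ↪ I ⧸ C` gives an endomorphism of
`I` whose range is still disjoint from `C`, hence equal to `E`. -/
lemma exists_hull {I : Type u} [AddCommGroup I] [Module A I] [Module.Injective A I]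
    (M : Submodule A I) :
    ∃ E : Submodule A I, M ≤ E ∧ (∃ r : I →ₗ[A] E, ∀ x : E, r x = x) ∧
      ∀ N ≤ E, Disjoint N M → N = ⊥ := by
  obtain ⟨C, -, hC⟩ := zorn_le_nonempty₀ {C : Submodule A I | Disjoint C M}
    (fun c hc hch y hy => ⟨sSup c, hch.directedOn.disjoint_sSup_left.2 hc, fun z hz => le_sSup hz⟩)
    ⊥ disjoint_bot_left
  obtain ⟨E, hME, hE⟩ := zorn_le_nonempty₀ {E : Submodule A I | M ≤ E ∧ Disjoint E C}
    (fun c hc hch y hy => ⟨sSup c, ⟨(hc hy).1.trans (le_sSup hy),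
      hch.directedOn.disjoint_sSup_left.2 fun b hb => (hc hb).2⟩, fun z hz => le_sSup hz⟩)
    M ⟨le_rfl, hC.prop.symm⟩
  have hEC : Disjoint E C := hE.prop.2
  have hinj : Function.Injective (C.mkQ.comp E.subtype) := by
    rw [← LinearMap.ker_eq_bot, LinearMap.ker_eq_bot']
    intro x hx
    have : (x : I) ∈ C := by simpa using hx
    exact Subtype.ext (Submodule.disjoint_def.1 hEC x x.2 this)
  obtain ⟨φ, hφ⟩ := Module.Injective.out _ hinj E.subtype
  let ψ : I →ₗ[A] I := φ.comp C.mkQ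
  have hψE : ∀ x ∈ E, ψ x = x := fun x hx => hφ ⟨x, hx⟩
  have hψC : ∀ x ∈ C, ψ x = 0 := fun x hx => by
    have : C.mkQ x = 0 := by simpa using hx
    simp only [ψ, LinearMap.comp_apply, this, map_zero]
  have hFC : Disjoint (LinearMap.range ψ) C := by
    have hd : Disjoint (C.comap ψ) M := by
      rw [Submodule.disjoint_def]
      intro x hx hxM
      have hx' : ψ x ∈ C := hx
      rw [hψE x (hME hxM)] at hx'
      exact Submodule.disjoint_def.1 hEC x (hME hxM) hx'
    have hle : C.comap ψ ≤ C := hC.le_of_ge hd fun x hx => by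
      simp [Submodule.mem_comap, hψC x hx]
    rw [Submodule.disjoint_def]
    rintro _ ⟨x, rfl⟩ hx
    exact hψC x (hle hx)
  have hEF : E ≤ LinearMap.range ψ := fun x hx => ⟨x, hψE x hx⟩
  have hFE : LinearMap.range ψ ≤ E := hE.le_of_ge ⟨hME.trans hEF, hFC⟩ hEF
  refine ⟨E, hME, ⟨ψ.codRestrict E fun x => hFE ⟨x, rfl⟩, fun x => Subtype.ext (hψE x x.2)⟩, ?_⟩
  intro N hNE hNM
  have hd : Disjoint (N ⊔ C) M := by
    rw [Submodule.disjoint_def]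
    intro x hx hxM
    obtain ⟨n, hn, c, hc, rfl⟩ := Submodule.mem_sup.1 hx
    have : c ∈ E := by
      have := E.sub_mem (hME hxM) (hNE hn)
      simpa using this
    obtain rfl := Submodule.disjoint_def.1 hEC c this hc
    rw [add_zero] at hxM ⊢
    exact Submodule.disjoint_def.1 hNM n hn hxM
  have hNC : N ≤ C := le_sup_left.trans (hC.le_of_ge hd le_sup_right)
  exact le_bot_iff.1 (hEC hNE hNC)

/-- The elements annihilated by the Jacobson radical; over an Artinian ring this is the socle,
the largest semisimple submodule. -/
def socle (E : Type u) [AddCommGroup E] [Module A E] : Submodule A E where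
  carrier := {x | ∀ a ∈ Ring.jacobson A, a • x = 0}
  add_mem' hx hy a ha := by rw [smul_add, hx a ha, hy a ha, add_zero]
  zero_mem' a _ := smul_zero a
  smul_mem' c x hx a ha := by
    rw [← mul_smul]
    exact hx _ (Ideal.mul_mem_right c _ ha)

/-- A semisimple submodule lies in every essential submodule. -/
lemma socle_le [IsArtinianRing A] {E : Type u} [AddCommGroup E] [Module A E] (M : Submodule A E)
    (hess : ∀ N, Disjoint N M → N = ⊥) : socle E ≤ M := by
  have : IsSemisimpleModule A (socle (A := A) E) :=
    isSemisimpleModule_of_jacobson_smul fun x a => Subtype.ext (x.2 a a.2)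
  obtain ⟨N, hN⟩ := exists_isCompl (M.comap (socle (A := A) E).subtype)
  have h0 : N.map (socle (A := A) E).subtype = ⊥ := by
    apply hess
    rw [Submodule.disjoint_def]
    rintro _ ⟨x, hx, rfl⟩ hxM
    have := Submodule.disjoint_def.1 hN.disjoint x hxM hx
    simp [this]
  have hN0 : N = ⊥ := by
    exact Submodule.map_injective_of_injective (Submodule.injective_subtype _)
      (h0.trans (Submodule.map_bot _).symm)
  have htop := hN.sup_eq_top
  rw [hN0, sup_bot_eq] at htop
  intro x hx
  have : (⟨x, hx⟩ : socle (A := A) E) ∈ M.comap (socle (A := A) E).subtype := by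
    rw [htop]; trivial
  exact this

/-- Over an Artin algebra, an essential extension `E` of a finitely generated module is finitely
generated: the socle of `E` is finite over `R`, and the submodules annihilated by the powers of the
Jacobson radical inherit this and exhaust `E`. -/
lemma finite_of_essential (R : Type u) [CommRing R] [IsArtinianRing R] [Algebra R A]
    [Module.Finite R A] {E : Type u} [AddCommGroup E] [Module A E] (M : Submodule A E)
    (hM : M.FG) (hess : ∀ N, Disjoint N M → N = ⊥) : Module.Finite A E := by
  have : IsArtinianRing A := isArtinian_of_tower R inferInstance
  have : IsSemiprimaryRing A := inferInstance
  let _ : Module R E := Module.compHom E (algebraMap R A)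
  have : IsScalarTower R A E := ⟨fun r a x => by
    rw [Algebra.smul_def, mul_smul]; rfl⟩
  -- the submodule annihilated by the `n`-th power of the radical
  let tor (n : ℕ) : Submodule R E :=
    { carrier := {x | ∀ a ∈ Ring.jacobson A ^ n, a • x = 0}
      add_mem' := fun hx hy a ha => by rw [smul_add, hx a ha, hy a ha, add_zero]
      zero_mem' := fun a _ => smul_zero a
      smul_mem' := fun c x hx a ha => by
        rw [smul_comm, hx a ha, smul_zero] }
  have hMR : (M.restrictScalars R).FG := by
    have : Module.Finite A M := Module.Finite.iff_fg.2 hM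
    have : Module.Finite R M := Module.Finite.trans A M
    exact Module.Finite.iff_fg.1 this
  have h1 : ((socle (A := A) E).restrictScalars R).FG := hMR.of_le (socle_le M hess)
  have htor (n : ℕ) : (tor n).FG := by
    induction n with
    | zero =>
      have : tor 0 = ⊥ := by
        rw [eq_bot_iff]
        intro x hx
        have := hx 1 (by rw [Submodule.pow_zero, Ideal.one_eq_top]; trivial)
        simpa using this
      rw [this]; exact Submodule.fg_bot
    | succ n ih =>
      have hfg : ((Ring.jacobson A).restrictScalars R).FG := IsNoetherian.noetherian _
      -- Multiplication by finitely many `R`-generators of the radical maps `tor (n + 1)` to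
      -- `(tor n) ^ k` with kernel the socle.
      obtain ⟨k, b, hb⟩ := Submodule.fg_iff_exists_fin_generating_family.1 hfg
      let F : E →ₗ[R] (Fin k → E) := LinearMap.pi fun i => Module.toModuleEnd R (S := A) E (b i)
      refine Submodule.fg_of_fg_map_of_fg_inf_ker F ?_ ?_
      · refine Submodule.FG.of_le (Submodule.fg_pi (p := fun _ => tor n) fun _ => ih) ?_
        rintro _ ⟨x, hx, rfl⟩ i - a ha
        have hbi : b i ∈ Ring.jacobson A := by
          have : b i ∈ (Ring.jacobson A).restrictScalars R := by
            rw [← hb]; exact Submodule.subset_span ⟨i, rfl⟩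
          exact this
        change a • b i • x = 0
        rw [← mul_smul]
        apply hx
        rw [Submodule.pow_succ]
        exact Ideal.mul_mem_mul ha hbi
      · refine h1.of_le ?_
        rintro x ⟨-, hx⟩ a ha
        have ha' : a ∈ Submodule.span R (Set.range b) := by rw [hb]; exact ha
        have hx' : ∀ i, b i • x = 0 := fun i => congrFun hx i
        refine Submodule.span_induction (p := fun a _ => a • x = 0) ?_ (zero_smul _ _)
          (fun a c _ _ h1 h2 => by rw [add_smul, h1, h2, add_zero])
          (fun r a _ h => by rw [smul_assoc, h, smul_zero]) ha'
        rintro _ ⟨i, rfl⟩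
        exact hx' i
  obtain ⟨n, hn⟩ := IsSemiprimaryRing.isNilpotent (R := A)
  have htop : tor n = ⊤ := by
    rw [eq_top_iff]
    intro x _ a ha
    rw [hn] at ha
    rw [show a = 0 from ha, zero_smul]
  have : Module.Finite R E := ⟨htop ▸ htor n⟩
  exact Module.Finite.of_restrictScalars_finite R A E

/-- An injective module containing `A ⧸ J`, with `J` the Jacobson radical, separates points: `A x`
has a simple quotient `A ⧸ m`, which embeds into `A ⧸ J`. -/
lemma exists_separating [IsArtinianRing A] {Q : Type u} [AddCommGroup Q] [Module A Q]
    [Module.Injective A Q] (e : (A ⧸ Ring.jacobson A) →ₗ[A] Q) (he : Function.Injective e)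
    {M : Type u} [AddCommGroup M] [Module A M] (x : M) (hx : x ≠ 0) :
    ∃ f : M →ₗ[A] Q, f x ≠ 0 := by
  obtain ⟨m, hm, hLm⟩ := Ideal.exists_le_maximal (LinearMap.ker (LinearMap.toSpanSingleton A M x))
    (fun h => hx (by
      have : (1 : A) ∈ LinearMap.ker (LinearMap.toSpanSingleton A M x) := by rw [h]; trivial
      simpa using this))
  have hJm : Ring.jacobson A ≤ m := sInf_le hm.out
  have : IsSemisimpleModule A (A ⧸ Ring.jacobson A) :=
    isSemisimpleModule_of_jacobson_smul fun y a => by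
      obtain ⟨y, rfl⟩ := Submodule.Quotient.mk_surjective _ y
      rw [← Submodule.Quotient.mk_smul, Submodule.Quotient.mk_eq_zero]
      exact Ideal.mul_mem_right y _ a.2
  obtain ⟨s, hs⟩ := IsSemisimpleModule.lifting_property (Submodule.factor hJm)
    (Submodule.factor_surjective hJm) LinearMap.id
  have hsinj : Function.Injective s :=
    Function.LeftInverse.injective (g := Submodule.factor hJm) fun y => LinearMap.congr_fun hs y
  let g : (A ⧸ LinearMap.ker (LinearMap.toSpanSingleton A M x)) →ₗ[A] Q :=
    e ∘ₗ s ∘ₗ Submodule.factor hLm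
  let t : (A ⧸ LinearMap.ker (LinearMap.toSpanSingleton A M x)) →ₗ[A] M :=
    (LinearMap.ker (LinearMap.toSpanSingleton A M x)).liftQ (LinearMap.toSpanSingleton A M x) le_rfl
  have ht : Function.Injective t := by
    rw [← LinearMap.ker_eq_bot]
    exact Submodule.ker_liftQ_eq_bot' _ _ rfl
  obtain ⟨f, hf⟩ := Module.Injective.out t ht g
  refine ⟨f, fun h0 => hm.ne_top ((Ideal.eq_top_iff_one m).2 ?_)⟩
  have h1 : t (Submodule.Quotient.mk 1) = x := by simp [t]
  have h2 := hf (Submodule.Quotient.mk 1)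
  rw [h1, h0] at h2
  have h3 : s (Submodule.factor hLm (Submodule.Quotient.mk 1)) = 0 :=
    he (by rw [map_zero]; exact h2.symm)
  have h4 : Submodule.factor hLm (Submodule.Quotient.mk 1) = 0 :=
    hsinj (by rw [h3, map_zero])
  exact (Submodule.Quotient.mk_eq_zero _).1 h4

variable (A) in
/-- A finitely generated injective cogenerator: the injective hull of `A` modulo its radical. -/
lemma exists_cogenerator (R : Type u) [CommRing R] [IsArtinianRing R] [Algebra R A]
    [Module.Finite R A] :
    ∃ Q : ModuleCat.{u} A, Module.Finite A Q ∧ Module.Injective A Q ∧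
      ∀ M : ModuleCat.{u} A, Module.Finite A M →
        ∃ (n : ℕ) (f : M →ₗ[A] (Fin n → Q)), Function.Injective f := by
  have : IsArtinianRing A := isArtinian_of_tower R inferInstance
  let S : ModuleCat.{u} A := ModuleCat.of A (A ⧸ Ring.jacobson A)
  let I : ModuleCat.{u} A := Injective.under S
  have : Injective (ModuleCat.of A I) := inferInstanceAs (Injective (Injective.under S))
  have : Module.Injective A I := Module.injective_module_of_injective_object A I
  let j : (A ⧸ Ring.jacobson A) →ₗ[A] I := (Injective.ι S).hom
  have hj : Function.Injective j := (ModuleCat.mono_iff_injective (Injective.ι S)).1 inferInstance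
  obtain ⟨E, hSE, ⟨r, hr⟩, hess⟩ := exists_hull (LinearMap.range j)
  have hEinj : Module.Injective A E := ⟨fun X Y _ _ _ _ f hf g => by
    obtain ⟨h, hh⟩ := Module.Injective.out f hf (E.subtype ∘ₗ g)
    exact ⟨r ∘ₗ h, fun x => by simp [hh, hr]⟩⟩
  have hEfin : Module.Finite A E := by
    refine finite_of_essential R ((LinearMap.range j).comap E.subtype) ?_ ?_
    · have : (LinearMap.range j).comap E.subtype =
          LinearMap.range (j.codRestrict E fun x => hSE ⟨x, rfl⟩) := by
        rw [LinearMap.range_codRestrict]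
      rw [this, LinearMap.range_eq_map]
      exact Submodule.FG.map _ (Module.Finite.fg_top)
    · intro N hN
      refine Submodule.map_injective_of_injective E.injective_subtype
        ((hess _ (Submodule.map_subtype_le _ _) ?_).trans (Submodule.map_bot _).symm)
      rw [Submodule.disjoint_def]
      rintro _ ⟨x, hx, rfl⟩ hxM
      rw [Submodule.disjoint_def.1 hN x hx hxM, map_zero]
  let e : (A ⧸ Ring.jacobson A) →ₗ[A] E := j.codRestrict E fun x => hSE ⟨x, rfl⟩
  have he : Function.Injective e := fun x y h => hj (congrArg Subtype.val h)
  refine ⟨ModuleCat.of A E, hEfin, hEinj, fun M hM => ?_⟩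
  -- A map `M → Eⁿ` with minimal kernel is injective, since `E` separates points.
  obtain ⟨K, ⟨n, f, rfl⟩, hmin⟩ := IsArtinian.set_has_minimal
    {K : Submodule A M | ∃ (n : ℕ) (f : M →ₗ[A] (Fin n → E)), LinearMap.ker f = K}
    ⟨_, 0, 0, rfl⟩
  refine ⟨n, f, ?_⟩
  rw [← LinearMap.ker_eq_bot]
  by_contra hne
  obtain ⟨x, hx, hx0⟩ := Submodule.exists_mem_ne_zero_of_ne_bot hne
  obtain ⟨g, hg⟩ := exists_separating e he x hx0
  let fnext : M →ₗ[A] (Fin (n + 1) → E) := LinearMap.pi (Fin.cons g fun i => LinearMap.proj i ∘ₗ f)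
  refine hmin _ ⟨n + 1, fnext, rfl⟩ (lt_of_le_of_ne ?_ fun h => hg ?_)
  · intro y hy
    ext i
    have := congrFun (LinearMap.mem_ker.1 hy) i.succ
    simpa [fnext] using this
  · rw [← h] at hx
    have := congrFun (LinearMap.mem_ker.1 hx) 0
    simpa [fnext] using this

/-! ### Additive closures and brackets -/

lemma isSummand_trans {M X Y : ModuleCat.{u} A} (h₁ : IsSummand A M X) (h₂ : IsSummand A X Y) :
    IsSummand A M Y := by
  obtain ⟨i, r, hr⟩ := h₁
  obtain ⟨j, s, hs⟩ := h₂
  refine ⟨j ∘ₗ i, r ∘ₗ s, LinearMap.ext fun x => ?_⟩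
  have h1 := LinearMap.congr_fun hs (i x)
  change r (s (j (i x))) = x
  rw [show s (j (i x)) = i x from h1]
  exact LinearMap.congr_fun hr x

lemma isSummand_of_equiv {M X : ModuleCat.{u} A} (e : M ≃ₗ[A] X) : IsSummand A M X :=
  ⟨e.toLinearMap, e.symm.toLinearMap, by ext; simp⟩

lemma isSummand_pi {ι : Type} {M X : ι → ModuleCat.{u} A} (h : ∀ j, IsSummand A (M j) (X j)) :
    IsSummand A (ModuleCat.of A (∀ j, M j)) (ModuleCat.of A (∀ j, X j)) := by
  choose i r hr using h
  refine ⟨LinearMap.pi fun j => i j ∘ₗ LinearMap.proj j,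
    LinearMap.pi fun j => r j ∘ₗ LinearMap.proj j, ?_⟩
  ext x j
  exact LinearMap.congr_fun (hr j) (x j)

lemma mem_addClosure {T : Set (ModuleCat.{u} A)} {ι : Type} [Finite ι] {f : ι → ModuleCat.{u} A}
    (hf : ∀ j, f j ∈ T) {M : ModuleCat.{u} A} (hM : IsSummand A M (ModuleCat.of A (∀ j, f j))) :
    M ∈ addClosure A T := by
  obtain ⟨n, ⟨e⟩⟩ := Finite.exists_equiv_fin ι
  exact ⟨n, fun k => f (e.symm k), fun k => hf _, isSummand_trans hM (isSummand_of_equiv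
    (LinearEquiv.piCongrLeft' A (fun j => (f j : Type u)) e))⟩

lemma subset_addClosure (T : Set (ModuleCat.{u} A)) : T ⊆ addClosure A T := fun M hM =>
  mem_addClosure (ι := Unit) (f := fun _ => M) (fun _ => hM)
    (isSummand_of_equiv (LinearEquiv.funUnique Unit A M).symm)

lemma addClosure_mono {T T' : Set (ModuleCat.{u} A)} (h : T ⊆ T') :
    addClosure A T ⊆ addClosure A T' := fun _ ⟨n, f, hf, hM⟩ => ⟨n, f, fun j => h (hf j), hM⟩

lemma addClosure_idem (T : Set (ModuleCat.{u} A)) :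
    addClosure A (addClosure A T) ⊆ addClosure A T := by
  rintro M ⟨n, f, hf, hM⟩
  choose m g hg hs using hf
  refine mem_addClosure (ι := Σ j : Fin n, Fin (m j)) (f := fun p => g p.1 p.2)
    (fun p => hg _ _) (isSummand_trans hM (isSummand_trans (isSummand_pi hs)
      (isSummand_of_equiv ?_)))
  exact (LinearEquiv.piCurry A fun (j : Fin n) (k : Fin (m j)) => (g j k : Type u)).symm

/-- A class of modules is additively closed if it is closed under finite direct sums and
direct summands. -/
def AddClosed (V : Set (ModuleCat.{u} A)) : Prop := addClosure A V ⊆ V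

lemma AddClosed.summand {V : Set (ModuleCat.{u} A)} (hV : AddClosed V) {M X : ModuleCat.{u} A}
    (h : IsSummand A M X) (hX : X ∈ V) : M ∈ V :=
  hV (mem_addClosure (ι := Unit) (f := fun _ => X) (fun _ => hX)
    (isSummand_trans h (isSummand_of_equiv (LinearEquiv.funUnique Unit A X).symm)))

lemma AddClosed.pi {V : Set (ModuleCat.{u} A)} (hV : AddClosed V) {n : ℕ}
    {f : Fin n → ModuleCat.{u} A} (hf : ∀ j, f j ∈ V) : ModuleCat.of A (∀ j, f j) ∈ V :=
  hV ⟨n, f, hf, isSummand_of_equiv (LinearEquiv.refl A _)⟩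

lemma AddClosed.prod {V : Set (ModuleCat.{u} A)} (hV : AddClosed V) {X Y : ModuleCat.{u} A}
    (hX : X ∈ V) (hY : Y ∈ V) : ModuleCat.of A (X × Y) ∈ V := by
  refine hV.summand ?_ (hV.pi (n := 2) (f := ![X, Y]) (by
    intro j; fin_cases j
    · exact hX
    · exact hY))
  refine ⟨LinearMap.pi (Fin.cons (LinearMap.fst A X Y) (Fin.cons (LinearMap.snd A X Y) finZeroElim)),
    LinearMap.prod (LinearMap.proj (φ := fun j => ((![X, Y] j : ModuleCat.{u} A) : Type u)) 0)
      (LinearMap.proj (φ := fun j => ((![X, Y] j : ModuleCat.{u} A) : Type u)) 1), ?_⟩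
  exact LinearMap.ext fun x => rfl

lemma addClosed_bracket (T : Set (ModuleCat.{u} A)) (n : ℕ) : AddClosed (bracket A T (n + 1)) := by
  cases n with
  | zero => exact addClosure_idem T
  | succ n => exact addClosure_idem _

lemma isSummand_of_forall_eq_zero {M : ModuleCat.{u} A} (h : ∀ x : M, x = 0) (X : ModuleCat.{u} A) :
    IsSummand A M X := ⟨0, 0, LinearMap.ext fun x => by simp [h x]⟩

lemma addClosure_subset_bracket (T : Set (ModuleCat.{u} A)) (n : ℕ) :
    addClosure A T ⊆ bracket A T (n + 1) := by
  induction n with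
  | zero => exact subset_rfl
  | succ n ih =>
    intro X hX
    have h0 : ModuleCat.of A PUnit.{u + 1} ∈ addClosure A T :=
      ⟨0, finZeroElim, finZeroElim, isSummand_of_forall_eq_zero (fun x => rfl) _⟩
    exact subset_addClosure _ ⟨X, hX, _, ih h0, LinearMap.id, 0, Function.injective_id,
      fun x => ⟨0, rfl⟩, by simp⟩

/-! ### Embeddings into injectives -/

/-- A map vanishing on the image of `f` factors through the cokernel `g` of `f`. -/
lemma exists_descend {X Y Z W : Type u} [AddCommGroup X] [Module A X] [AddCommGroup Y] [Module A Y]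
    [AddCommGroup Z] [Module A Z] [AddCommGroup W] [Module A W] {f : X →ₗ[A] Y} {g : Y →ₗ[A] Z}
    (hg : Function.Surjective g) (hfg : LinearMap.range f = LinearMap.ker g) (h : Y →ₗ[A] W)
    (hf : ∀ x, h (f x) = 0) : ∃ h' : Z →ₗ[A] W, ∀ y, h' (g y) = h y := by
  have hk : LinearMap.ker g ≤ LinearMap.ker h := by
    rw [← hfg]
    rintro _ ⟨x, rfl⟩
    exact hf x
  refine ⟨(LinearMap.ker g).liftQ h hk ∘ₗ (g.quotKerEquivOfSurjective hg).symm.toLinearMap,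
    fun y => ?_⟩
  have : (g.quotKerEquivOfSurjective hg).symm (g y) = Submodule.Quotient.mk y := by
    rw [LinearEquiv.symm_apply_eq]; rfl
  simp [this]

/-- Schanuel-type comparison: for a summand `K` of `X`, the cokernel of `K` in an injective `I` is a
summand of `D ⊕ I`, where `D` is the cokernel of `X` in an injective `J`. -/
lemma isSummand_cokernel {K X I J C D : ModuleCat.{u} A} (hKX : IsSummand A K X)
    (hI : Module.Injective A I) (hJ : Module.Injective A J)
    (h₁ : SES A K I C) (h₂ : SES A X J D) : IsSummand A C (ModuleCat.of A (D × I)) := by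
  obtain ⟨i, r, hr⟩ := hKX
  obtain ⟨f, p, hf, hp, hfp⟩ := h₁
  obtain ⟨g, q, hg, hq, hgq⟩ := h₂
  have hpf : ∀ x, p (f x) = 0 := fun x => by
    have : f x ∈ LinearMap.ker p := hfp ▸ ⟨x, rfl⟩
    exact this
  have hqg : ∀ x, q (g x) = 0 := fun x => by
    have : g x ∈ LinearMap.ker q := hgq ▸ ⟨x, rfl⟩
    exact this
  obtain ⟨α, hα⟩ := Module.Injective.out f hf (g ∘ₗ i)
  obtain ⟨β, hβ⟩ := Module.Injective.out g hg (f ∘ₗ r)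
  have hr' : ∀ x, r (i x) = x := LinearMap.congr_fun hr
  obtain ⟨γ, hγ⟩ := exists_descend hp hfp (β ∘ₗ α - LinearMap.id) (fun x => by simp [hα, hβ, hr'])
  obtain ⟨α', hα'⟩ := exists_descend hp hfp (q ∘ₗ α) (fun x => by simp [hα, hqg])
  obtain ⟨β', hβ'⟩ := exists_descend hq hgq (p ∘ₗ β) (fun x => by simp [hβ, hpf])
  refine ⟨LinearMap.prod α' (-γ), LinearMap.coprod β' p, LinearMap.ext fun c => ?_⟩
  obtain ⟨y, rfl⟩ := hp c
  simp [hα', hβ', hγ]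

/-- `K` embeds into a finitely generated injective module with cokernel in `V`. The embedding need not
be an injective hull. -/
def HasCosyzygyIn (V : Set (ModuleCat.{u} A)) (K : ModuleCat.{u} A) : Prop :=
  ∃ J D : ModuleCat.{u} A, Module.Finite A J ∧ Module.Injective A J ∧ D ∈ V ∧ SES A K J D

/-- Having a cosyzygy in an additively closed class that contains the finitely generated injectives
passes to direct sums and summands. -/
lemma hasCosyzygyIn_addClosure {U V : Set (ModuleCat.{u} A)} (hV : AddClosed V)
    (hinj : ∀ I : ModuleCat.{u} A, Module.Finite A I → Module.Injective A I → I ∈ V)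
    (hU : ∀ X ∈ U, HasCosyzygyIn V X) {K : ModuleCat.{u} A} (hK : K ∈ addClosure A U) :
    HasCosyzygyIn V K := by
  obtain ⟨n, X, hX, hKX⟩ := hK
  choose J D hJf hJi hD f g hf hg hfg using fun j => hU _ (hX j)
  let F : (∀ j, X j) →ₗ[A] (∀ j, J j) := LinearMap.pi fun j => f j ∘ₗ LinearMap.proj j
  let G : (∀ j, J j) →ₗ[A] (∀ j, D j) := LinearMap.pi fun j => g j ∘ₗ LinearMap.proj j
  have hSES : SES A (ModuleCat.of A (∀ j, X j)) (ModuleCat.of A (∀ j, J j))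
      (ModuleCat.of A (∀ j, D j)) := by
    refine ⟨F, G, fun x y h => funext fun j => hf j (congrFun h j), fun y => ?_, ?_⟩
    · choose x hx using fun j => hg j (y j)
      exact ⟨x, funext hx⟩
    · ext y
      constructor
      · rintro ⟨x, rfl⟩
        refine LinearMap.mem_ker.2 (funext fun j => ?_)
        have : f j (x j) ∈ LinearMap.ker (g j) := hfg j ▸ ⟨x j, rfl⟩
        exact this
      · intro hy
        have : ∀ j, ∃ x, f j x = y j := fun j => by
          have : y j ∈ LinearMap.ker (g j) := congrFun hy j
          rw [← hfg j] at this
          exact this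
        choose x hx using this
        exact ⟨x, funext hx⟩
  have hPf : Module.Finite A (ModuleCat.of A (∀ j, J j)) :=
    inferInstanceAs (Module.Finite A (∀ j, J j))
  have hPi : Module.Injective A (ModuleCat.of A (∀ j, J j)) :=
    inferInstanceAs (Module.Injective A (∀ j, J j))
  obtain ⟨i, r, hr⟩ := hKX
  let k : K →ₗ[A] (∀ j, J j) := F ∘ₗ i
  have hk : Function.Injective k := by
    refine Function.Injective.comp (g := F) (fun x y h => funext fun j => hf j (congrFun h j)) ?_
    exact Function.LeftInverse.injective (g := r) (LinearMap.congr_fun hr)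
  have hSES' : SES A K (ModuleCat.of A (∀ j, J j))
      (ModuleCat.of A ((∀ j, J j) ⧸ LinearMap.range k)) :=
    ⟨k, (LinearMap.range k).mkQ, hk, Submodule.mkQ_surjective _, (Submodule.ker_mkQ _).symm⟩
  exact ⟨_, _, hPf, hPi, hV.summand (isSummand_cokernel ⟨i, r, hr⟩ hPi hPi hSES' hSES)
    (hV.prod (hV.pi hD) (hinj _ hPf hPi)), hSES'⟩

/-- The horseshoe lemma for embeddings into injectives: for an extension `X` of `D` by `C`, the
cosyzygy can be chosen as an extension of that of `D` by that of `C`. -/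
lemma hasCosyzygyIn_ext {V₁ V₂ : Set (ModuleCat.{u} A)} {C X D : ModuleCat.{u} A}
    (hC : HasCosyzygyIn V₁ C) (hD : HasCosyzygyIn V₂ D) (h : SES A C X D) :
    HasCosyzygyIn { Y | ∃ C' ∈ V₁, ∃ D' ∈ V₂, SES A C' Y D' } X := by
  obtain ⟨I, C', hIf, hIi, hC', f, p, hf, hp, hfp⟩ := hC
  obtain ⟨J, D', hJf, hJi, hD', g, q, hg, hq, hgq⟩ := hD
  obtain ⟨a, b, ha, hb, hab⟩ := h
  have hba : ∀ x, b (a x) = 0 := fun x => by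
    have : a x ∈ LinearMap.ker b := hab ▸ ⟨x, rfl⟩
    exact this
  have hqg : ∀ x, q (g x) = 0 := fun x => by
    have : g x ∈ LinearMap.ker q := hgq ▸ ⟨x, rfl⟩
    exact this
  obtain ⟨e, he⟩ := Module.Injective.out a ha f
  let k : X →ₗ[A] (I × J) := LinearMap.prod e (g ∘ₗ b)
  have hker : ∀ x, b x = 0 → ∃ c, a c = x := fun x hx => by
    have : x ∈ LinearMap.ker b := hx
    rwa [← hab] at this
  have hk : Function.Injective k := by
    rw [← LinearMap.ker_eq_bot, LinearMap.ker_eq_bot']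
    intro x hx
    have h1 : e x = 0 := congrArg Prod.fst hx
    have h2 : g (b x) = 0 := congrArg Prod.snd hx
    obtain ⟨c, rfl⟩ := hker x (hg (by rw [h2, map_zero]))
    rw [he] at h1
    rw [hf (h1.trans (map_zero f).symm), map_zero]
  let Y := ModuleCat.of A ((I × J) ⧸ LinearMap.range k)
  have hI2 : Module.Injective A (I × J) := ⟨fun X' Y' _ _ _ _ φ hφ ψ => by
    obtain ⟨h1, hh1⟩ := Module.Injective.out φ hφ (LinearMap.fst A I J ∘ₗ ψ)
    obtain ⟨h2, hh2⟩ := Module.Injective.out φ hφ (LinearMap.snd A I J ∘ₗ ψ)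
    exact ⟨LinearMap.prod h1 h2, fun x => Prod.ext (hh1 x) (hh2 x)⟩⟩
  have hke : LinearMap.range k = LinearMap.ker (LinearMap.range k).mkQ := (Submodule.ker_mkQ _).symm
  refine ⟨ModuleCat.of A (I × J), Y, inferInstanceAs (Module.Finite A (I × J)), hI2,
    ⟨C', hC', D', hD', ?_⟩, k, (LinearMap.range k).mkQ, hk, Submodule.mkQ_surjective _, hke⟩
  obtain ⟨s, hs⟩ := exists_descend hp hfp ((LinearMap.range k).mkQ ∘ₗ LinearMap.inl A I J)
    (fun x => by
      refine (Submodule.Quotient.mk_eq_zero _).2 ⟨a x, ?_⟩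
      exact Prod.ext (he x) (by simp [k, hba]))
  obtain ⟨t, ht⟩ := exists_descend (Submodule.mkQ_surjective _) hke (q ∘ₗ LinearMap.snd A I J)
    (fun x => by simp [k, hqg])
  refine ⟨s, t, ?_, fun d => ?_, ?_⟩
  · rw [← LinearMap.ker_eq_bot, LinearMap.ker_eq_bot']
    intro c hc
    obtain ⟨y, rfl⟩ := hp c
    rw [hs] at hc
    obtain ⟨x, hx⟩ := (Submodule.Quotient.mk_eq_zero _).1 hc
    have h1 : e x = y := congrArg Prod.fst hx
    have h2 : g (b x) = 0 := congrArg Prod.snd hx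
    obtain ⟨c, rfl⟩ := hker x (hg (by rw [h2, map_zero]))
    have : f c ∈ LinearMap.ker p := hfp ▸ ⟨c, rfl⟩
    rw [← h1, he]
    exact this
  · obtain ⟨y, rfl⟩ := hq d
    exact ⟨(LinearMap.range k).mkQ (0, y), ht _⟩
  · ext y
    obtain ⟨⟨u, v⟩, rfl⟩ := Submodule.mkQ_surjective _ y
    constructor
    · rintro ⟨c, hc⟩
      obtain ⟨w, rfl⟩ := hp c
      rw [← hc, hs, LinearMap.mem_ker]
      exact (ht (w, 0)).trans (map_zero q)
    · intro hy
      have hv : q v = 0 := (ht (u, v)).symm.trans hy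
      have hv' : v ∈ LinearMap.ker q := hv
      rw [← hgq] at hv'
      obtain ⟨d, rfl⟩ := hv'
      obtain ⟨x, rfl⟩ := hb d
      refine ⟨p (u - e x), ?_⟩
      rw [hs]
      refine (Submodule.Quotient.eq _).2 ⟨-x, ?_⟩
      exact Prod.ext (by simp [k]) (by simp [k])

/-- The pushout of `P ← K → J` is an extension of `D` by `P`, and it is `M ⊕ J` because `J` is
injective. -/
lemma SES.pushout {K P M J D : ModuleCat.{u} A} (h₁ : SES A K P M) (hJ : Module.Injective A J)
    (h₂ : SES A K J D) : SES A P (ModuleCat.of A (M × J)) D := by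
  obtain ⟨f, p, hf, hp, hfp⟩ := h₁
  obtain ⟨g, q, hg, hq, hgq⟩ := h₂
  have hpf : ∀ x, p (f x) = 0 := fun x => by
    have : f x ∈ LinearMap.ker p := hfp ▸ ⟨x, rfl⟩
    exact this
  have hqg : ∀ x, q (g x) = 0 := fun x => by
    have : g x ∈ LinearMap.ker q := hgq ▸ ⟨x, rfl⟩
    exact this
  obtain ⟨e, he⟩ := Module.Injective.out f hf g
  obtain ⟨h, hh⟩ := exists_descend hp hfp (q ∘ₗ e) (fun x => by simp [he, hqg])
  refine ⟨LinearMap.prod p e, q ∘ₗ LinearMap.snd A M J - h ∘ₗ LinearMap.fst A M J, ?_, ?_, ?_⟩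
  · rw [← LinearMap.ker_eq_bot, LinearMap.ker_eq_bot']
    intro x hx
    have h1 : p x = 0 := congrArg Prod.fst hx
    have h2 : e x = 0 := congrArg Prod.snd hx
    have hx' : x ∈ LinearMap.ker p := h1
    rw [← hfp] at hx'
    obtain ⟨c, rfl⟩ := hx'
    rw [he] at h2
    rw [hg (h2.trans (map_zero g).symm), map_zero]
  · intro d
    obtain ⟨y, rfl⟩ := hq d
    exact ⟨(0, y), by simp⟩
  · ext ⟨m, y⟩
    obtain ⟨x, rfl⟩ := hp m
    constructor
    · rintro ⟨z, hz⟩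
      rw [← hz, LinearMap.mem_ker]
      simp [hh]
    · intro hy
      have h1 : q y - h (p x) = 0 := hy
      have h2 : y - e x ∈ LinearMap.ker q := by
        rw [LinearMap.mem_ker, map_sub, ← h1, hh]; rfl
      rw [← hgq] at h2
      obtain ⟨c, hc⟩ := h2
      refine ⟨x + f c, Prod.ext (by simp [hpf]) ?_⟩
      simp [he, hc]

variable (A) in
/-- There are enough finitely generated injectives, and they are all summands of powers of a single
one. -/
lemma exists_injective_generator (R : Type u) [CommRing R] [IsArtinianRing R] [Algebra R A]
    [Module.Finite R A] :
    ∃ Q : ModuleCat.{u} A, Module.Finite A Q ∧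
      (∀ I : ModuleCat.{u} A, Module.Finite A I → Module.Injective A I → I ∈ addClosure A {Q}) ∧
      ∀ M : ModuleCat.{u} A, Module.Finite A M → ∃ (J : ModuleCat.{u} A) (f : M →ₗ[A] J),
        Module.Finite A J ∧ Module.Injective A J ∧ Function.Injective f := by
  obtain ⟨Q, hQf, hQi, hQ⟩ := exists_cogenerator A R
  refine ⟨Q, hQf, fun I hIf hIi => ?_, fun M hM => ?_⟩
  · obtain ⟨n, f, hf⟩ := hQ I hIf
    obtain ⟨r, hr⟩ := Module.Injective.out f hf LinearMap.id
    exact ⟨n, fun _ => Q, fun _ => rfl, f, r, LinearMap.ext hr⟩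
  · obtain ⟨n, f, hf⟩ := hQ M hM
    exact ⟨ModuleCat.of A (Fin n → Q), f, inferInstanceAs (Module.Finite A (Fin n → Q)),
      inferInstanceAs (Module.Injective A (Fin n → Q)), hf⟩

/-- Passing to cosyzygies does not increase the number of extensions needed. -/
lemma hasCosyzygyIn_bracket {T W : ModuleCat.{u} A}
    (hW : ∀ I : ModuleCat.{u} A, Module.Finite A I → Module.Injective A I → I ∈ addClosure A {W})
    (hT : HasCosyzygyIn (addClosure A {W}) T) (n : ℕ) :
    ∀ K ∈ bracket A {T} (n + 1), HasCosyzygyIn (bracket A {W} (n + 1)) K := by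
  have h1 : ∀ K ∈ addClosure A {T}, HasCosyzygyIn (addClosure A {W}) K := fun K hK =>
    hasCosyzygyIn_addClosure (addClosure_idem _) hW (by rintro _ rfl; exact hT) hK
  induction n with
  | zero => exact h1
  | succ n ih =>
    intro K hK
    refine hasCosyzygyIn_addClosure (addClosed_bracket _ _)
      (fun I hIf hIi => addClosure_subset_bracket _ _ (hW I hIf hIi)) ?_ hK
    rintro X ⟨C, hC, D, hD, hX⟩
    obtain ⟨J, E, hJf, hJi, hE, h⟩ := hasCosyzygyIn_ext (h1 C hC) (ih D hD) hX
    exact ⟨J, E, hJf, hJi, subset_addClosure _ hE, h⟩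

lemma mem_addClosure_of_projective {P : ModuleCat.{u} A} (hPf : Module.Finite A P)
    (hPp : Module.Projective A P) : P ∈ addClosure A {ModuleCat.of A A} := by
  obtain ⟨n, f, hf⟩ := Module.Finite.exists_fin' A P
  obtain ⟨s, hs⟩ := Module.projective_lifting_property f LinearMap.id hf
  exact ⟨n, fun _ => ModuleCat.of A A, fun _ => rfl, s, f, hs⟩

/-- If the first syzygies of a class of modules are built from `T` in `n + 1` steps, then the
modules themselves are built in `n + 2` steps from a module `T'` depending only on `T`. -/
lemma exists_bracket_succ (R : Type u) [CommRing R] [IsArtinianRing R] [Algebra R A]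
    [Module.Finite R A] (T : ModuleCat.{u} A) (hT : Module.Finite A T) :
    ∃ T' : ModuleCat.{u} A, Module.Finite A T' ∧ ∀ (n : ℕ) (K P M : ModuleCat.{u} A),
      K ∈ bracket A {T} (n + 1) → Module.Finite A P → Module.Projective A P → SES A K P M →
        M ∈ bracket A {T'} (n + 2) := by
  obtain ⟨Q, hQf, hQ, hemb⟩ := exists_injective_generator A R
  obtain ⟨J, f, hJf, hJi, hf⟩ := hemb T hT
  -- `W` generates the projectives, the injectives and a cosyzygy of `T`.
  let D : ModuleCat.{u} A := ModuleCat.of A (J ⧸ LinearMap.range f)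
  let W : ModuleCat.{u} A := ModuleCat.of A ((D × Q) × A)
  have hWc : AddClosed (addClosure A {W}) := addClosure_idem {W}
  have hD : D ∈ addClosure A {W} :=
    hWc.summand ⟨LinearMap.inl A (D × Q) A ∘ₗ LinearMap.inl A D Q,
      LinearMap.fst A D Q ∘ₗ LinearMap.fst A (D × Q) A, rfl⟩ (subset_addClosure _ rfl)
  have hQW : Q ∈ addClosure A {W} :=
    hWc.summand ⟨LinearMap.inl A (D × Q) A ∘ₗ LinearMap.inr A D Q,
      LinearMap.snd A D Q ∘ₗ LinearMap.fst A (D × Q) A, rfl⟩ (subset_addClosure _ rfl)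
  have hAW : ModuleCat.of A A ∈ addClosure A {W} :=
    hWc.summand ⟨LinearMap.inr A (D × Q) A,
      LinearMap.snd A (D × Q) A, rfl⟩ (subset_addClosure _ rfl)
  have hIW : ∀ I : ModuleCat.{u} A, Module.Finite A I → Module.Injective A I →
      I ∈ addClosure A {W} := fun I hIf hIi =>
    addClosure_idem {W} (addClosure_mono (by rintro _ rfl; exact hQW) (hQ I hIf hIi))
  have hTW : HasCosyzygyIn (addClosure A {W}) T :=
    ⟨J, D, hJf, hJi, hD, f, (LinearMap.range f).mkQ, hf, Submodule.mkQ_surjective _,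
      (Submodule.ker_mkQ _).symm⟩
  have hDf : Module.Finite A D := inferInstanceAs (Module.Finite A (J ⧸ LinearMap.range f))
  refine ⟨W, inferInstanceAs (Module.Finite A ((D × Q) × A)), fun n K P M hK hPf hPp h => ?_⟩
  obtain ⟨I, E, hIf, hIi, hE, hKE⟩ := hasCosyzygyIn_bracket hIW hTW n K hK
  have hP : P ∈ addClosure A {W} := addClosure_idem {W}
    (addClosure_mono (by rintro _ rfl; exact hAW) (mem_addClosure_of_projective hPf hPp))
  refine (addClosed_bracket _ _).summand (X := ModuleCat.of A (M × I))
    ⟨LinearMap.inl A M I, LinearMap.fst A M I, rfl⟩ ?_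
  exact subset_addClosure _ ⟨P, hP, E, hE, h.pushout hIi hKE⟩

/-! ### Syzygies and projective dimension -/

lemma SES.finite_left [IsNoetherianRing A] {K P M : ModuleCat.{u} A} (h : SES A K P M)
    (hP : Module.Finite A P) : Module.Finite A K := by
  obtain ⟨f, -, hf, -⟩ := h
  exact Module.Finite.of_injective f hf

lemma syzCat_zero {K : ModuleCat.{u} A} (hK : Module.Finite A K) : K ∈ SyzCat A 0 :=
  ⟨hK, fun _ => K, finZeroElim, rfl, fun _ => hK, finZeroElim, finZeroElim⟩

lemma syzCat_succ [IsNoetherianRing A] {n : ℕ} {K P M : ModuleCat.{u} A} (h : SES A K P M)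
    (hPf : Module.Finite A P) (hPp : Module.Projective A P) (hM : M ∈ SyzCat A n) :
    K ∈ SyzCat A (n + 1) := by
  obtain ⟨hMf, Ks, Ps, h0, hKs, hPs, hS⟩ := hM
  have hK := h.finite_left hPf
  refine ⟨hK, Fin.cons K Ks, Fin.cons P Ps, rfl, ?_, ?_, ?_⟩
  · exact Fin.cases hK hKs
  · exact Fin.cases ⟨hPf, hPp⟩ hPs
  · refine Fin.cases ?_ fun i => ?_
    · simpa [h0] using h
    · simpa using hS i

lemma exists_of_mem_syzCat_succ {n : ℕ} {K : ModuleCat.{u} A} (h : K ∈ SyzCat A (n + 1)) :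
    ∃ P M : ModuleCat.{u} A, Module.Finite A P ∧ Module.Projective A P ∧ M ∈ SyzCat A n ∧
      SES A K P M := by
  obtain ⟨hK, Ks, Ps, rfl, hKs, hPs, hS⟩ := h
  exact ⟨Ps 0, Ks 1, (hPs 0).1, (hPs 0).2, ⟨hKs _, fun i => Ks i.succ, fun i => Ps i.succ, rfl,
    fun i => hKs _, fun i => hPs _, fun i => hS i.succ⟩, hS 0⟩

lemma exists_free_cover [IsNoetherianRing A] {M : ModuleCat.{u} A} (hM : Module.Finite A M) :
    ∃ K P : ModuleCat.{u} A, Module.Finite A P ∧ Module.Projective A P ∧ SES A K P M := by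
  obtain ⟨n, f, hf⟩ := Module.Finite.exists_fin' A M
  exact ⟨ModuleCat.of A (LinearMap.ker f), ModuleCat.of A (Fin n → A),
    inferInstanceAs (Module.Finite A (Fin n → A)), inferInstanceAs (Module.Projective A (Fin n → A)),
    (LinearMap.ker f).subtype, f, Submodule.injective_subtype _, hf, Submodule.range_subtype _⟩

/-- Finitely generated modules over an Artinian ring have projective covers, hence minimal syzygies.
The cover is a minimal submodule `N` of a free module `Aⁿ` mapping onto `M`; a lift `Aⁿ → N` of the
presentation restricts to an automorphism of `N`, so `N` is a summand. -/
lemma exists_syzygy [IsArtinianRing A] {M : ModuleCat.{u} A} (hM : Module.Finite A M) :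
    ∃ K P : ModuleCat.{u} A, Module.Finite A P ∧ Module.Projective A P ∧ SES A K P M ∧
      IsSyzygyOf A K M := by
  obtain ⟨n, p, hp⟩ := Module.Finite.exists_fin' A M
  obtain ⟨N, hN, hmin⟩ := IsArtinian.set_has_minimal
    {N : Submodule A (Fin n → A) | Function.Surjective (p ∘ₗ N.subtype)}
    ⟨⊤, fun m => by obtain ⟨x, rfl⟩ := hp m; exact ⟨⟨x, trivial⟩, rfl⟩⟩
  obtain ⟨g, hg⟩ := Module.projective_lifting_property (p ∘ₗ N.subtype) p hN
  have hg' : ∀ x, p (g x) = p x := LinearMap.congr_fun hg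
  have hmin' : ∀ N' ≤ N, (∀ m, ∃ x ∈ N', p x = m) → N' = N := fun N' hle hs => by
    by_contra hne
    refine hmin N' (fun m => ?_) (lt_of_le_of_ne hle hne)
    obtain ⟨x, hx, rfl⟩ := hs m
    exact ⟨⟨x, hx⟩, rfl⟩
  let e : N →ₗ[A] N := g ∘ₗ N.subtype
  have hes : Function.Surjective e := by
    have : (LinearMap.range e).map N.subtype = N := by
      refine hmin' _ (Submodule.map_subtype_le _ _) fun m => ?_
      obtain ⟨x, rfl⟩ := hN m
      exact ⟨e x, ⟨e x, ⟨x, rfl⟩, rfl⟩, hg' x⟩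
    rw [← LinearMap.range_eq_top]
    refine Submodule.map_injective_of_injective N.injective_subtype (this.trans ?_)
    simp
  have hei : Function.Injective e := IsNoetherian.injective_of_surjective_endomorphism e hes
  let e' := LinearEquiv.ofBijective e ⟨hei, hes⟩
  have hproj : Module.Projective A N := Module.Projective.of_split N.subtype (e'.symm.toLinearMap ∘ₗ g)
    (LinearMap.ext fun x => e'.symm_apply_apply x)
  let q : N →ₗ[A] M := p ∘ₗ N.subtype
  refine ⟨ModuleCat.of A (LinearMap.ker q), ModuleCat.of A N,
    inferInstanceAs (Module.Finite A N), hproj,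
    ⟨(LinearMap.ker q).subtype, q, Submodule.injective_subtype _, hN, Submodule.range_subtype _⟩,
    ModuleCat.of A N, (LinearMap.ker q).subtype, q, hproj, Submodule.injective_subtype _, hN,
    Submodule.range_subtype _, fun N' hN' => ?_⟩
  have : Submodule.map N.subtype N' = N := by
    refine hmin' _ (Submodule.map_subtype_le _ _) fun m => ?_
    obtain ⟨x, rfl⟩ := hN m
    have hx : x ∈ LinearMap.ker q ⊔ N' := by rw [hN']; trivial
    obtain ⟨y, hy, z, hz, rfl⟩ := Submodule.mem_sup.1 hx
    refine ⟨z, ⟨z, hz, rfl⟩, ?_⟩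
    have hy' : p (y : Fin n → A) = 0 := hy
    change p z = p (y + z)
    rw [map_add, hy', zero_add]
  refine Submodule.map_injective_of_injective N.injective_subtype (this.trans ?_)
  simp

lemma SES.hasProjectiveDimensionLT_iff {K P M : ModuleCat.{u} A} (h : SES A K P M)
    (hP : Module.Projective A P) (n : ℕ) :
    HasProjectiveDimensionLT M (n + 2) ↔ HasProjectiveDimensionLT K (n + 1) := by
  obtain ⟨f, g, hf, hg, hfg⟩ := h
  let S : ShortComplex (ModuleCat.{u} A) := ShortComplex.mk (ModuleCat.ofHom f) (ModuleCat.ofHom g)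
    (by
      ext x
      have : f x ∈ LinearMap.ker g := hfg ▸ ⟨x, rfl⟩
      exact this)
  have hS : S.ShortExact :=
    { exact := (ShortComplex.moduleCat_exact_iff_range_eq_ker S).2 hfg
      mono_f := (ModuleCat.mono_iff_injective _).2 hf
      epi_g := (ModuleCat.epi_iff_surjective _).2 hg }
  exact hS.hasProjectiveDimensionLT_X₃_iff n ((IsProjective.iff_projective P).1 hP)

lemma hasProjectiveDimensionLT_one_iff {K : ModuleCat.{u} A} :
    HasProjectiveDimensionLT K 1 ↔ Module.Projective A K :=
  projective_iff_hasProjectiveDimensionLT_one.symm.trans (IsProjective.iff_projective K).symm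

/-- A minimal `d`-th syzygy exists and its projective dimension is at least that of `M` minus `d`. -/
lemma exists_iterSyzygy [IsArtinianRing A] {M : ModuleCat.{u} A} (hM : Module.Finite A M) (d : ℕ) :
    ∃ K : ModuleCat.{u} A, Module.Finite A K ∧ IsIterSyzygyOf A d K M ∧
      ∀ n, HasProjectiveDimensionLT K (n + 1) → HasProjectiveDimensionLT M (n + d + 1) := by
  induction d with
  | zero => exact ⟨M, hM, ⟨LinearEquiv.refl A M⟩, fun n h => h⟩
  | succ d ih =>
    obtain ⟨L, hL, hLM, h⟩ := ih
    obtain ⟨K, P, hPf, hPp, hS, hK⟩ := exists_syzygy hL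
    refine ⟨K, hS.finite_left hPf, ⟨L, hLM, hK⟩, fun n hn => ?_⟩
    have := h (n + 1) ((hS.hasProjectiveDimensionLT_iff hPp n).2 hn)
    rwa [show n + 1 + d + 1 = n + (d + 1) + 1 by omega] at this

/-- Dimension shift: `i`-th syzygies have projective dimension at most `d - i`. -/
lemma hasProjectiveDimensionLT_of_mem_syzCat {d : ℕ}
    (hd : ∀ M : ModuleCat.{u} A, Module.Finite A M → HasProjectiveDimensionLT M (d + 1))
    {i e : ℕ} (h : e + i = d) {K : ModuleCat.{u} A} (hK : K ∈ SyzCat A i) :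
    HasProjectiveDimensionLT K (e + 1) := by
  induction i generalizing e K with
  | zero => 
    obtain rfl : e = d := by omega
    exact hd K hK.1
  | succ i ih =>
    obtain ⟨P, M, hPf, hPp, hM, hS⟩ := exists_of_mem_syzCat_succ hK
    exact (hS.hasProjectiveDimensionLT_iff hPp e).1 (ih (e := e + 1) (by omega) hM)

/-! ### Bounds on the extension dimension -/

/-- The finitely generated modules of projective dimension at most `m` are built from one module in
`m + 1` steps. -/
lemma exists_bracket_of_hasProjectiveDimensionLT (R : Type u) [CommRing R] [IsArtinianRing R]
    [Algebra R A] [Module.Finite R A] (m : ℕ) :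
    ∃ T : ModuleCat.{u} A, Module.Finite A T ∧ ∀ K : ModuleCat.{u} A, Module.Finite A K →
      HasProjectiveDimensionLT K (m + 1) → K ∈ bracket A {T} (m + 1) := by
  have : IsArtinianRing A := isArtinian_of_tower R inferInstance
  induction m with
  | zero => exact ⟨ModuleCat.of A A, inferInstanceAs (Module.Finite A A), fun K hK h =>
      mem_addClosure_of_projective hK (hasProjectiveDimensionLT_one_iff.1 h)⟩
  | succ m ih =>
    obtain ⟨T, hT, h⟩ := ih
    obtain ⟨T', hT', h'⟩ := exists_bracket_succ R T hT
    refine ⟨T', hT', fun M hM hpd => ?_⟩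
    obtain ⟨K, P, hPf, hPp, hS⟩ := exists_free_cover hM
    exact h' m K P M (h K (hS.finite_left hPf) ((hS.hasProjectiveDimensionLT_iff hPp m).1 hpd))
      hPf hPp hS

/-- If the `i`-th syzygies are built from one module in `n + 1` steps, then all finitely generated
modules are built from one module in `n + i + 1` steps. -/
lemma exists_bracket_of_syzCat (R : Type u) [CommRing R] [IsArtinianRing R]
    [Algebra R A] [Module.Finite R A] (i n : ℕ) (T : ModuleCat.{u} A) (hT : Module.Finite A T)
    (h : SyzCat A i ⊆ bracket A {T} (n + 1)) :
    ∃ T' : ModuleCat.{u} A, Module.Finite A T' ∧ SyzCat A 0 ⊆ bracket A {T'} (n + i + 1) := by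
  have : IsArtinianRing A := isArtinian_of_tower R inferInstance
  induction i generalizing n T with
  | zero => exact ⟨T, hT, h⟩
  | succ i ih =>
    obtain ⟨T₁, hT₁, h₁⟩ := exists_bracket_succ R T hT
    obtain ⟨T', hT', h'⟩ := ih (n + 1) T₁ hT₁ fun M hM => by
      obtain ⟨K, P, hPf, hPp, hS⟩ := exists_free_cover hM.1
      exact h₁ n K P M (h (syzCat_succ hS hPf hPp hM)) hPf hPp hS
    refine ⟨T', hT', ?_⟩
    rwa [add_right_comm n 1 i] at h'

lemma ed_le {C : Set (ModuleCat.{u} A)} {m : ℕ} {T : ModuleCat.{u} A} (hT : Module.Finite A T)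
    (h : C ⊆ bracket A {T} (m + 1)) : ed A C ≤ m := sInf_le ⟨m, rfl, T, hT, h⟩

/-- A finite extension dimension is attained. -/
lemma exists_bracket_of_ed {C : Set (ModuleCat.{u} A)} (h : ed A C ≠ ⊤) :
    ∃ m : ℕ, ed A C = m ∧ ∃ T : ModuleCat.{u} A, Module.Finite A T ∧
      C ⊆ bracket A {T} (m + 1) := by
  refine csInf_mem (s := { n : ℕ∞ | ∃ m : ℕ, n = (m : ℕ∞) ∧
    ∃ T : ModuleCat.{u} A, Module.Finite A T ∧ C ⊆ bracket A {T} (m + 1) }) ?_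
  by_contra hne
  rw [Set.not_nonempty_iff_eq_empty] at hne
  exact h (by rw [ed, hne, sInf_empty])

/-- A finite global dimension is attained. -/
lemma exists_gldim (h : gldim A ≠ ⊤) :
    ∃ d : ℕ, gldim A = d ∧ ∀ M K : ModuleCat.{u} A, Module.Finite A M →
      IsIterSyzygyOf A d K M → Module.Projective A K := by
  refine csInf_mem (s := { n : ℕ∞ | ∃ d : ℕ, n = (d : ℕ∞) ∧
    ∀ M K : ModuleCat.{u} A, Module.Finite A M → IsIterSyzygyOf A d K M →
      Module.Projective A K }) ?_
  by_contra hne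
  rw [Set.not_nonempty_iff_eq_empty] at hne
  exact h (by rw [gldim, hne, sInf_empty])

end

/-- Corollary 2.21: if the Artin algebra `A` has finite global
dimension and `ed(A) = gldim(A)`, then `ed Ωⁱ(A-mod) = gldim(A) - i` for every
`0 ≤ i ≤ gldim(A)`. -/
theorem stmt12 (R : Type u) [CommRing R] [IsArtinianRing R]
    [Algebra R A] [Module.Finite R A]
    (hfin : gldim A ≠ ⊤) (hed : ed A (SyzCat A 0) = gldim A) :
    ∀ i : ℕ, (i : ℕ∞) ≤ gldim A → ed A (SyzCat A i) = gldim A - (i : ℕ∞) := by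
  have : IsArtinianRing A := isArtinian_of_tower R inferInstance
  obtain ⟨d, hd, hproj⟩ := exists_gldim hfin
  -- The global dimension, defined by minimal syzygies, bounds projective dimensions.
  have hpd : ∀ M : ModuleCat.{u} A, Module.Finite A M → HasProjectiveDimensionLT M (d + 1) := by
    intro M hM
    obtain ⟨K, -, hK, h⟩ := exists_iterSyzygy hM d
    simpa using h 0 (hasProjectiveDimensionLT_one_iff.2 (hproj M K hM hK))
  intro i hi
  rw [hd] at hi hed ⊢
  have hid : i ≤ d := by exact_mod_cast hi
  obtain ⟨T, hT, hbr⟩ := exists_bracket_of_hasProjectiveDimensionLT (A := A) R (d - i)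
  have hle : ed A (SyzCat A i) ≤ (d - i : ℕ) := ed_le hT fun K hK =>
    hbr K hK.1 (hasProjectiveDimensionLT_of_mem_syzCat hpd (Nat.sub_add_cancel hid) hK)
  obtain ⟨m, hm, T', hT', hsub⟩ := exists_bracket_of_ed (ne_top_of_le_ne_top (by simp) hle)
  obtain ⟨T₀, hT₀, h₀⟩ := exists_bracket_of_syzCat R i m T' hT' hsub
  have hge : (d : ℕ∞) ≤ (m + i : ℕ) := hed ▸ ed_le hT₀ h₀
  rw [hm] at hle ⊢
  have h1 : m ≤ d - i := by exact_mod_cast hle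
  have h2 : d ≤ m + i := by exact_mod_cast hge
  rw [← ENat.natCast_sub, Nat.cast_inj]
  omega

end Paper
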